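/- For all positive real numbers λ and μ, ∫₀^∞ dθ/((μ² + sin²θ)(λ² + θ²)) = (π/(2λμ√(1+μ²)))·(e^{2λ} + (√(1+μ²) − μ)²)/(e^{2λ} − (√(1+μ²) − μ)²). -/

import Mathlib

/-!
Put `s = √(1 + μ²)` and `q = (s - μ)²`, so that `0 < q < 1` and `(q + q⁻¹) / 2 = 2 μ² + 1`. The
periodic factor `1 / (μ² + sin² θ) = 2 / (2 μ² + 1 - cos 2θ)` is then, up to a constant, the Poisson
kernel of the disc at radius `q` and angle `2θ`, and it expands as
`(1 / (μ s)) * (2 ∑ₙ qⁿ cos (2nθ) - 1)`. Multiplying by `1 / (l² + θ²)` and integrating term by term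
over the line, which is legitimate because the terms are dominated by `qⁿ / (l² + θ²)`, reduces the
claim to `∫ cos (bθ) / (l² + θ²) dθ = (π / l) * exp (-l b)` for `b ≥ 0`
(`integral_cos_div`). The latter is Fourier inversion for `x ↦ exp (-2πl|x|)`, whose Fourier
transform is `w ↦ l / (π (l² + w²))`. The remaining series is geometric with ratio `q exp (-2l)`,
and the integrand is even, so the half-line contributes half of the result.
-/

open MeasureTheory Filter Topology

open FourierTransform in
/-- A two-sided exponential is integrable, and its Fourier transform is a Cauchy density. -/
lemma fourier_exp_neg_abs (l : ℝ) (hl : 0 < l) (w : ℝ) :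
    Integrable (fun x : ℝ => Complex.exp (-(2 * Real.pi * l * |x| : ℝ))) ∧
    𝓕 (fun x : ℝ => Complex.exp (-(2 * Real.pi * l * |x| : ℝ))) w
      = ((l / (Real.pi * (l ^ 2 + w ^ 2)) : ℝ) : ℂ) := by
  have hpi := Real.pi_pos
  -- The transform splits at the origin into two integrals of complex exponentials, at every
  -- frequency; frequency zero also yields integrability.
  have key : ∀ v : ℝ,
      let a : ℂ := 2 * Real.pi * l - 2 * Real.pi * v * Complex.I
      let b : ℂ := -(2 * Real.pi * l) - 2 * Real.pi * v * Complex.I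
      0 < a.re ∧ b.re < 0 ∧
      Set.EqOn (fun x : ℝ => Complex.exp (↑(-2 * Real.pi * x * v) * Complex.I) •
        Complex.exp (-(2 * Real.pi * l * |x| : ℝ))) (fun x : ℝ => Complex.exp (a * x)) (Set.Iic 0) ∧
      Set.EqOn (fun x : ℝ => Complex.exp (↑(-2 * Real.pi * x * v) * Complex.I) •
        Complex.exp (-(2 * Real.pi * l * |x| : ℝ))) (fun x : ℝ => Complex.exp (b * x))
        (Set.Ioi 0) := by
    intro v
    refine ⟨by simp; positivity, by simp; positivity, ?_, ?_⟩
    · intro x hx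
      simp only [smul_eq_mul, ← Complex.exp_add, abs_of_nonpos (Set.mem_Iic.1 hx)]
      push_cast
      ring_nf
    · intro x hx
      simp only [smul_eq_mul, ← Complex.exp_add, abs_of_pos (Set.mem_Ioi.1 hx)]
      push_cast
      ring_nf
  constructor
  · obtain ⟨ha, hb, h1, h2⟩ := key 0
    have i1 := (integrableOn_exp_mul_complex_Iic ha 0).congr_fun h1.symm measurableSet_Iic
    have i2 := (integrableOn_exp_mul_complex_Ioi hb 0).congr_fun h2.symm measurableSet_Ioi
    have := i1.union i2
    rw [Set.Iic_union_Ioi, integrableOn_univ] at this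
    simpa using this
  · obtain ⟨ha, hb, h1, h2⟩ := key w
    have i1 := (integrableOn_exp_mul_complex_Iic ha 0).congr_fun h1.symm measurableSet_Iic
    have i2 := (integrableOn_exp_mul_complex_Ioi hb 0).congr_fun h2.symm measurableSet_Ioi
    rw [Real.fourier_real_eq_integral_exp_smul, ← intervalIntegral.integral_Iic_add_Ioi i1 i2,
      setIntegral_congr_fun measurableSet_Iic h1, setIntegral_congr_fun measurableSet_Ioi h2,
      integral_exp_mul_complex_Iic ha, integral_exp_mul_complex_Ioi hb]
    set a : ℂ := 2 * Real.pi * l - 2 * Real.pi * w * Complex.I with ha_def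
    set b : ℂ := -(2 * Real.pi * l) - 2 * Real.pi * w * Complex.I with hb_def
    have ha0 : a ≠ 0 := fun h => by simp [h] at ha
    have hb0 : b ≠ 0 := fun h => by simp [h] at hb
    have hpc : (Real.pi : ℂ) ≠ 0 := by exact_mod_cast hpi.ne'
    have hd : (l : ℂ) ^ 2 + (w : ℂ) ^ 2 ≠ 0 := by
      have : l ^ 2 + w ^ 2 ≠ 0 := by positivity
      exact_mod_cast this
    have hab : a * b = -(4 * Real.pi ^ 2 * (l ^ 2 + w ^ 2)) := by
      rw [ha_def, hb_def]; linear_combination (4 * (Real.pi : ℂ) ^ 2 * w ^ 2) * Complex.I_sq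
    have hba : b - a = -(4 * Real.pi * l) := by rw [ha_def, hb_def]; ring
    push_cast
    simp only [mul_zero, Complex.exp_zero]
    have : 1 / a + -1 / b = (b - a) / (a * b) := by field_simp; ring
    rw [this, hab, hba]
    field_simp

lemma integrable_inv_sq_add_sq (l : ℝ) (hl : 0 < l) :
    Integrable (fun w : ℝ => 1 / (l ^ 2 + w ^ 2)) := by
  have h := (integrable_inv_one_add_sq.comp_div hl.ne').const_mul (1 / l ^ 2)
  refine h.congr (ae_of_all _ fun w => ?_)
  have : l ^ 2 + w ^ 2 ≠ 0 := by positivity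
  field_simp

open FourierTransform in
/-- Fourier inversion for the two-sided exponential, in real form. -/
lemma integral_cos_div (l : ℝ) (hl : 0 < l) (b : ℝ) (hb : 0 ≤ b) :
    ∫ w : ℝ, Real.cos (b * w) / (l ^ 2 + w ^ 2) = Real.pi / l * Real.exp (-(l * b)) := by
  have hpi := Real.pi_pos
  have hF : 𝓕 (fun x : ℝ => Complex.exp (-(2 * Real.pi * l * |x| : ℝ)))
      = fun w : ℝ => ((l / (Real.pi * (l ^ 2 + w ^ 2)) : ℝ) : ℂ) :=
    funext fun w => (fourier_exp_neg_abs l hl w).2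
  have hi : Integrable (fun w : ℝ => l / (Real.pi * (l ^ 2 + w ^ 2))) := by
    refine ((integrable_inv_sq_add_sq l hl).const_mul (l / Real.pi)).congr
      (ae_of_all _ fun w => ?_)
    have : l ^ 2 + w ^ 2 ≠ 0 := by positivity
    field_simp
  have hinv := congrFun (Continuous.fourierInv_fourier_eq
    (f := fun x : ℝ => Complex.exp (-(2 * Real.pi * l * |x| : ℝ))) (by fun_prop)
    (fourier_exp_neg_abs l hl 0).1 (by rw [hF]; exact hi.ofReal)) (b / (2 * Real.pi))
  rw [hF, Real.fourierInv_eq'] at hinv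
  have hint : Integrable (fun v : ℝ =>
      Complex.exp (↑(2 * Real.pi * inner ℝ v (b / (2 * Real.pi))) * Complex.I) •
        ((l / (Real.pi * (l ^ 2 + v ^ 2)) : ℝ) : ℂ)) := by
    refine (hi.ofReal (𝕜 := ℂ)).mono (Continuous.aestronglyMeasurable ?_)
      (ae_of_all _ fun v => ?_)
    · have h0 : ∀ v : ℝ, Real.pi * (l ^ 2 + v ^ 2) ≠ 0 := fun v => by positivity
      have h1 : Continuous fun v : ℝ => l / (Real.pi * (l ^ 2 + v ^ 2)) :=
        Continuous.div (by fun_prop) (by fun_prop) h0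
      have h2 : Continuous fun v : ℝ => (inner ℝ v (b / (2 * Real.pi)) : ℝ) := by fun_prop
      have h3 : Continuous fun v : ℝ =>
          Complex.exp (↑(2 * Real.pi * inner ℝ v (b / (2 * Real.pi))) * Complex.I) := by fun_prop
      exact h3.smul (Complex.continuous_ofReal.comp h1)
    · rw [norm_smul, Complex.norm_exp_ofReal_mul_I, one_mul]
      rfl
  have hre := congrArg Complex.re hinv
  rw [← Complex.reCLM_apply, ← Complex.reCLM.integral_comp_comm hint] at hre
  have e1 : ∀ v : ℝ, Complex.reCLM
      (Complex.exp (↑(2 * Real.pi * inner ℝ v (b / (2 * Real.pi))) * Complex.I) •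
        ((l / (Real.pi * (l ^ 2 + v ^ 2)) : ℝ) : ℂ))
      = l / Real.pi * (Real.cos (b * v) / (l ^ 2 + v ^ 2)) := by
    intro v
    have e2 : 2 * Real.pi * inner ℝ v (b / (2 * Real.pi)) = b * v := by
      simp only [RCLike.inner_apply, conj_trivial]
      field_simp
    rw [e2, Complex.reCLM_apply, smul_eq_mul, Complex.re_mul_ofReal, Complex.exp_ofReal_mul_I_re]
    have : l ^ 2 + v ^ 2 ≠ 0 := by positivity
    field_simp
  simp_rw [e1] at hre
  rw [integral_const_mul, ← Complex.ofReal_neg, Complex.exp_ofReal_re,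
    abs_of_nonneg (by positivity)] at hre
  have e3 : 2 * Real.pi * l * (b / (2 * Real.pi)) = l * b := by field_simp
  rw [e3] at hre
  rw [← hre]
  field_simp

/-- The Poisson kernel series in real form. -/
lemma hasSum_pow_mul_cos (q φ : ℝ) (hq0 : 0 < q) (hq1 : q < 1) :
    HasSum (fun n : ℕ => q ^ n * Real.cos (n * φ))
      ((1 - q * Real.cos φ) / (1 - 2 * q * Real.cos φ + q ^ 2)) := by
  set z : ℂ := q * Complex.exp (φ * Complex.I) with hz
  have hn : ‖z‖ < 1 := by
    rw [hz, norm_mul, Complex.norm_exp_ofReal_mul_I, mul_one, Complex.norm_real,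
      Real.norm_of_nonneg hq0.le]
    exact hq1
  have h := Complex.hasSum_re (hasSum_geometric_of_norm_lt_one hn)
  convert h using 1
  · ext n
    rw [hz, mul_pow, ← Complex.exp_nat_mul, ← Complex.ofReal_pow, Complex.re_ofReal_mul]
    have : (n : ℂ) * (φ * Complex.I) = ((n * φ : ℝ) : ℂ) * Complex.I := by push_cast; ring
    rw [this, Complex.exp_ofReal_mul_I_re]
  · have hre : z.re = q * Real.cos φ := by
      rw [hz, Complex.re_ofReal_mul, Complex.exp_ofReal_mul_I_re]
    have him : z.im = q * Real.sin φ := by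
      rw [hz, Complex.im_ofReal_mul, Complex.exp_ofReal_mul_I_im]
    rw [Complex.inv_re, Complex.normSq_apply]
    simp only [Complex.sub_re, Complex.sub_im, Complex.one_re, Complex.one_im, hre, him]
    congr 1
    linear_combination (-q ^ 2) * Real.sin_sq_add_cos_sq φ

theorem stmt15 (l μ : ℝ) (hl : 0 < l) (hμ : 0 < μ) :
    (∫ θ in Set.Ici (0:ℝ), 1 / ((μ ^ 2 + Real.sin θ ^ 2) * (l ^ 2 + θ ^ 2)))
      = Real.pi / (2 * l * μ * Real.sqrt (1 + μ ^ 2)) *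
        ((Real.exp (2 * l) + (Real.sqrt (1 + μ ^ 2) - μ) ^ 2)
          / (Real.exp (2 * l) - (Real.sqrt (1 + μ ^ 2) - μ) ^ 2)) := by
  set s := Real.sqrt (1 + μ ^ 2) with hs
  have hs2 : s ^ 2 = 1 + μ ^ 2 := Real.sq_sqrt (by positivity)
  have hs0 : 0 < s := Real.sqrt_pos.2 (by positivity)
  have hsμ : μ < s := by nlinarith
  have hs1 : s < 1 + μ := by nlinarith
  set q := (s - μ) ^ 2 with hq
  have hq0 : 0 < q := pow_pos (by linarith) 2
  have hq1 : q < 1 := by nlinarith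
  have hquad : q ^ 2 = 2 * (2 * μ ^ 2 + 1) * q - 1 := by
    have h1 : (s - μ) * (s + μ) = 1 := by linear_combination hs2
    have h2 : q * (s + μ) ^ 2 = 1 := by rw [hq, ← mul_pow, h1, one_pow]
    have h3 : q + (s + μ) ^ 2 = 2 * (2 * μ ^ 2 + 1) := by
      rw [hq]; linear_combination 2 * hs2
    linear_combination q * h3 - h2
  have hqs : 1 - q ^ 2 = 4 * μ * s * q := by
    have h3 : q = 2 * μ ^ 2 + 1 - 2 * μ * s := by rw [hq]; linear_combination hs2
    linear_combination hquad - 2 * q * h3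
  -- The kernel expansion at the angle `2θ`, divided by `l² + θ²`.
  have hsum : ∀ θ : ℝ, HasSum (fun n : ℕ => q ^ n * (Real.cos (2 * n * θ) / (l ^ 2 + θ ^ 2)))
      ((μ * s / (μ ^ 2 + Real.sin θ ^ 2) + 1) / 2 * (1 / (l ^ 2 + θ ^ 2))) := by
    intro θ
    have h := (hasSum_pow_mul_cos q (2 * θ) hq0 hq1).mul_right (1 / (l ^ 2 + θ ^ 2))
    have hterm : (fun n : ℕ => q ^ n * (Real.cos (2 * n * θ) / (l ^ 2 + θ ^ 2)))
        = fun n : ℕ => q ^ n * Real.cos (n * (2 * θ)) * (1 / (l ^ 2 + θ ^ 2)) := by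
      funext n
      rw [show (n : ℝ) * (2 * θ) = 2 * n * θ by ring]
      ring
    have hlim : (μ * s / (μ ^ 2 + Real.sin θ ^ 2) + 1) / 2
        = (1 - q * Real.cos (2 * θ)) / (1 - 2 * q * Real.cos (2 * θ) + q ^ 2) := by
      have hc : Real.cos (2 * θ) = 1 - 2 * Real.sin θ ^ 2 := by
        rw [Real.cos_two_mul, Real.cos_sq']; ring
      have hd : 1 - 2 * q * Real.cos (2 * θ) + q ^ 2 = 4 * q * (μ ^ 2 + Real.sin θ ^ 2) := by
        rw [hc]; linear_combination hquad
      have hp : μ ^ 2 + Real.sin θ ^ 2 ≠ 0 := by positivity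
      rw [hd, hc, div_add_one hp, div_div, div_eq_div_iff (by positivity) (by positivity)]
      linear_combination -(μ ^ 2 + Real.sin θ ^ 2) * (hquad + hqs)
    rw [hterm, hlim]
    exact h
  have hI := integrable_inv_sq_add_sq l hl
  have hpos : ∀ θ : ℝ, 0 < l ^ 2 + θ ^ 2 := fun θ => by positivity
  have hgeo := hasSum_geometric_of_lt_one hq0.le hq1
  have hswap := hasSum_integral_of_dominated_convergence (μ := volume)
    (F := fun (n : ℕ) (θ : ℝ) => q ^ n * (Real.cos (2 * n * θ) / (l ^ 2 + θ ^ 2)))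
    (fun (n : ℕ) (θ : ℝ) => q ^ n * (1 / (l ^ 2 + θ ^ 2)))
    (fun n => (Continuous.mul continuous_const (Continuous.div (by fun_prop) (by fun_prop)
      fun θ => (hpos θ).ne')).aestronglyMeasurable)
    (fun n => ae_of_all _ fun θ => by
      rw [norm_mul, norm_div, Real.norm_of_nonneg (hpos θ).le,
        Real.norm_of_nonneg (pow_nonneg hq0.le n)]
      gcongr
      exact Real.abs_cos_le_one _)
    (ae_of_all _ fun θ => (hgeo.mul_right _).summable)
    (by
      have : (fun θ : ℝ => ∑' n : ℕ, q ^ n * (1 / (l ^ 2 + θ ^ 2)))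
          = fun θ => (1 - q)⁻¹ * (1 / (l ^ 2 + θ ^ 2)) :=
        funext fun θ => (hgeo.mul_right _).tsum_eq
      rw [this]
      exact hI.const_mul _)
    (ae_of_all _ hsum)
  set x := q * Real.exp (-(2 * l)) with hx
  have hE1 : Real.exp (-(2 * l)) < 1 := by
    rw [← Real.exp_zero]; exact Real.exp_lt_exp.2 (by linarith)
  have hx0 : 0 < x := by positivity
  have hx1 : x < 1 := by nlinarith [Real.exp_pos (-(2 * l))]
  have hval : ∫ θ : ℝ, (μ * s / (μ ^ 2 + Real.sin θ ^ 2) + 1) / 2 * (1 / (l ^ 2 + θ ^ 2))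
      = (1 - x)⁻¹ * (Real.pi / l) := by
    refine hswap.unique ?_
    have hterm : (fun n : ℕ => ∫ θ : ℝ, q ^ n * (Real.cos (2 * n * θ) / (l ^ 2 + θ ^ 2)))
        = fun n : ℕ => x ^ n * (Real.pi / l) := by
      funext n
      rw [integral_const_mul, integral_cos_div l hl _ (by positivity), hx, mul_pow,
        ← Real.exp_nat_mul]
      ring_nf
    rw [hterm]
    exact (hasSum_geometric_of_lt_one hx0.le hx1).mul_right (Real.pi / l)
  have hone : ∫ θ : ℝ, 1 / (l ^ 2 + θ ^ 2) = Real.pi / l := by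
    simpa using integral_cos_div l hl 0 le_rfl
  have hK : Integrable (fun θ : ℝ => 1 / ((μ ^ 2 + Real.sin θ ^ 2) * (l ^ 2 + θ ^ 2))) := by
    have hp : ∀ θ : ℝ, 0 < μ ^ 2 + Real.sin θ ^ 2 := fun θ => by positivity
    refine (hI.const_mul (1 / μ ^ 2)).mono (Continuous.div (by fun_prop) (by fun_prop)
      fun θ => (mul_pos (hp θ) (hpos θ)).ne').aestronglyMeasurable (ae_of_all _ fun θ => ?_)
    have := hpos θ
    have := hp θ
    rw [Real.norm_of_nonneg (by positivity), Real.norm_of_nonneg (by positivity),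
      ← one_div_mul_one_div]
    gcongr
    nlinarith [sq_nonneg (Real.sin θ)]
  have hfull : ∫ θ : ℝ, 1 / ((μ ^ 2 + Real.sin θ ^ 2) * (l ^ 2 + θ ^ 2))
      = (2 * ((1 - x)⁻¹ * (Real.pi / l)) - Real.pi / l) / (μ * s) := by
    have e : ∀ θ : ℝ, (μ * s / (μ ^ 2 + Real.sin θ ^ 2) + 1) / 2 * (1 / (l ^ 2 + θ ^ 2))
        = μ * s / 2 * (1 / ((μ ^ 2 + Real.sin θ ^ 2) * (l ^ 2 + θ ^ 2)))
          + 1 / 2 * (1 / (l ^ 2 + θ ^ 2)) := by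
      intro θ
      have : μ ^ 2 + Real.sin θ ^ 2 ≠ 0 := by positivity
      have := (hpos θ).ne'
      field_simp
    simp_rw [e] at hval
    rw [integral_add (hK.const_mul _) (hI.const_mul _), integral_const_mul, integral_const_mul,
      hone] at hval
    rw [← hval]
    field_simp
    ring
  have hhalf := integral_comp_abs
    (f := fun θ : ℝ => 1 / ((μ ^ 2 + Real.sin θ ^ 2) * (l ^ 2 + θ ^ 2)))
  have heven : ∀ θ : ℝ, Real.sin |θ| ^ 2 = Real.sin θ ^ 2 := by
    intro θ
    rcases abs_choice θ with h | h <;> simp [h]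
  simp only [heven, sq_abs] at hhalf
  rw [integral_Ici_eq_integral_Ioi]
  rw [hfull] at hhalf
  have hxE : x = q / Real.exp (2 * l) := by rw [hx, Real.exp_neg]; rfl
  have hE := Real.exp_pos (2 * l)
  have hd : Real.exp (2 * l) - q ≠ 0 := by
    have : 1 < Real.exp (2 * l) := Real.one_lt_exp_iff.2 (by linarith)
    linarith
  have hinv : (1 - x)⁻¹ = Real.exp (2 * l) / (Real.exp (2 * l) - q) := by
    rw [hxE]; field_simp
  rw [hinv] at hhalf
  have : ∀ t u : ℝ, u = 2 * t → t = u / 2 := fun t u h => by linarith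
  rw [this _ _ hhalf]
  field_simp
  ring
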